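/- (Lemma 3, first identity: S(𝒫(η,P,ε)·P, ε) = η̂.) Fix P > 0, ε > 0, and η > 0. Assume: the infimum defining 𝒫(x, P, ε) is attained whenever its feasible set is nonempty; V := 𝒫(η, P, ε) is finite and positive; and the supremum defining S(V·P, ε) is attained with S(V·P, ε) > 0. Then S(V·P, ε) is the greatest element of the set { x ≥ 0 : 𝒫(x, P, ε) = V }; in particular S(V·P, ε) ≥ η. -/

import Mathlib

open Matrix Finset

noncomputable section

/-- `SINR_k(f) = |h_kᴴ f_k|² / (∑_{j≠k} |h_kᴴ f_j|² + σ²)`. -/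
def SINR {Nt K : ℕ} (h : Fin K → Fin Nt → ℂ) (σ2 : ℝ)
    (f : Fin K → Fin Nt → ℂ) (k : Fin K) : ℝ :=
  ‖star (h k) ⬝ᵥ f k‖ ^ 2 /
    ((∑ j ∈ Finset.univ.erase k, ‖star (h k) ⬝ᵥ f j‖ ^ 2) + σ2)

/-- `power(f) = ∑_k ‖f_k‖²`. -/
def power {Nt K : ℕ} (f : Fin K → Fin Nt → ℂ) : ℝ := ∑ k, ∑ i, ‖f k i‖ ^ 2

/-- `g(f) = ∑_k |aᵀ f_k|²`. -/
def gfun {Nt K : ℕ} (a : Fin Nt → ℂ) (f : Fin K → Fin Nt → ℂ) : ℝ :=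
  ∑ k, ‖a ⬝ᵥ f k‖ ^ 2

/-- The CRLB `C(q) = tr((Λ (q D) Λᵀ)⁻¹)`. -/
def Cq {N : ℕ} (Λ : Matrix (Fin 2) (Fin N) ℝ)
    (D : Matrix (Fin N) (Fin N) ℝ) (q : ℝ) : ℝ :=
  ((Λ * (q • D) * Λᵀ)⁻¹).trace

/-- Value set of the max-min-SINR problem `S(P, ε)`. -/
def Sfeas {Nt K N : ℕ} (h : Fin K → Fin Nt → ℂ) (a : Fin Nt → ℂ) (σ2 : ℝ)
    (Λ : Matrix (Fin 2) (Fin N) ℝ) (D : Matrix (Fin N) (Fin N) ℝ)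
    (P ε : ℝ) : Set ℝ :=
  {v | ∃ f : Fin K → Fin Nt → ℂ, power f ≤ P ∧
        (∃ q : ℝ, 0 < q ∧ q ≤ gfun a f ∧ Cq Λ D q ≤ ε) ∧
        v = ⨅ k, SINR h σ2 f k}

/-- `S(P, ε)`: the optimal value of the max-min-SINR problem. -/
def Sval {Nt K N : ℕ} (h : Fin K → Fin Nt → ℂ) (a : Fin Nt → ℂ) (σ2 : ℝ)
    (Λ : Matrix (Fin 2) (Fin N) ℝ) (D : Matrix (Fin N) (Fin N) ℝ)
    (P ε : ℝ) : ℝ :=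
  sSup (Sfeas h a σ2 Λ D P ε)

/-- Value set of the power-minimization problem `𝒫(η, P, ε)`. -/
def Pfeas {Nt K N : ℕ} (h : Fin K → Fin Nt → ℂ) (a : Fin Nt → ℂ) (σ2 : ℝ)
    (Λ : Matrix (Fin 2) (Fin N) ℝ) (D : Matrix (Fin N) (Fin N) ℝ)
    (η P ε : ℝ) : Set ℝ :=
  {v | ∃ f : Fin K → Fin Nt → ℂ, (∀ k, SINR h σ2 f k ≥ η) ∧
        (∃ q : ℝ, 0 < q ∧ q ≤ gfun a f ∧ Cq Λ D q ≤ ε) ∧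
        v = power f / P}

/-- `𝒫(η, P, ε)`: the optimal value of the power-minimization problem. -/
def Pval {Nt K N : ℕ} (h : Fin K → Fin Nt → ℂ) (a : Fin Nt → ℂ) (σ2 : ℝ)
    (Λ : Matrix (Fin 2) (Fin N) ℝ) (D : Matrix (Fin N) (Fin N) ℝ)
    (η P ε : ℝ) : ℝ :=
  sInf (Pfeas h a σ2 Λ D η P ε)

/-!
Maximizing a quality `u` under a budget on a cost `c`, and minimizing `c` under a requirement on
`u`, are inverse to each other. If `s` is the best quality within the budget `V`, and `V` is the
least cost of quality `η`, then a maximizer of quality `s` also achieves `η`, so it costs exactly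
`V`, and nothing of quality `s ≥ η` costs less. No requirement `x > s` can have least cost `V`,
since a minimizer would be within the budget `V`.

For beamformers, both optima are attained. As `C(q) = C(1) / q` and `C(1) > 0`, the sensing
constraint says `C(1) ≤ ε * g(f)`, a closed condition on `f`, and the power has compact sublevel
sets.
-/

section InverseProblems

variable {X α β : Type*}

theorem isGreatest_setOf_isLeast_image [Preorder α] [PartialOrder β] {u : X → α} {c : X → β}
    {F : Set X} {η s : α} {V : β} (hs : IsGreatest (u '' {f ∈ F | c f ≤ V}) s)
    (hV : IsLeast (c '' {f ∈ F | η ≤ u f}) V) :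
    IsGreatest {x | IsLeast (c '' {f ∈ F | x ≤ u f}) V} s := by
  have le_of_isLeast {x : α} (hx : IsLeast (c '' {f ∈ F | x ≤ u f}) V) : x ≤ s := by
    obtain ⟨f, ⟨hfF, hxf⟩, hcf⟩ := hx.1
    exact hxf.trans (hs.2 ⟨f, ⟨hfF, hcf.le⟩, rfl⟩)
  have hηs : η ≤ s := le_of_isLeast hV
  have le_cost : V ∈ lowerBounds (c '' {f ∈ F | s ≤ u f}) := by
    rintro _ ⟨f, ⟨hfF, hsf⟩, rfl⟩
    exact hV.2 ⟨f, ⟨hfF, hηs.trans hsf⟩, rfl⟩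
  obtain ⟨f, ⟨hfF, hcf⟩, rfl⟩ := hs.1
  have hf : c f ∈ c '' {g ∈ F | u f ≤ u g} := ⟨f, ⟨hfF, le_rfl⟩, rfl⟩
  exact ⟨⟨hcf.antisymm (le_cost hf) ▸ hf, le_cost⟩, fun x => le_of_isLeast⟩

theorem exists_isLeast_image_of_isCompact_sublevel [TopologicalSpace X] [TopologicalSpace α]
    [LinearOrder α] [ClosedIicTopology α] {c : X → α} {F : Set X} (hF : IsClosed F)
    (hFne : F.Nonempty) (hc : Continuous c) (hcompact : ∀ b, IsCompact {f | c f ≤ b}) :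
    ∃ m, IsLeast (c '' F) m := by
  obtain ⟨f₀, hf₀⟩ := hFne
  have hfar : ∀ᶠ f in Filter.cocompact X ⊓ Filter.principal F, c f₀ ≤ c f :=
    Filter.mem_inf_of_left <| Filter.mem_of_superset (hcompact (c f₀)).compl_mem_cocompact
      fun f hf => (not_le.1 hf).le
  obtain ⟨f, hfF, hmin⟩ := hc.continuousOn.exists_isMinOn' hF hf₀ hfar
  exact ⟨c f, ⟨f, hfF, rfl⟩, Set.forall_mem_image.2 hmin⟩

end InverseProblems

section Power

variable {Nt K : ℕ}

theorem norm_le_sqrt_power (f : Fin K → Fin Nt → ℂ) : ‖f‖ ≤ √(power f) := by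
  simp only [pi_norm_le_iff_of_nonneg (Real.sqrt_nonneg _)]
  refine fun k i => Real.le_sqrt_of_sq_le ?_
  calc ‖f k i‖ ^ 2 ≤ ∑ i, ‖f k i‖ ^ 2 :=
        single_le_sum (f := fun i => ‖f k i‖ ^ 2) (fun _ _ => by positivity) (mem_univ i)
    _ ≤ power f :=
        single_le_sum (f := fun k => ∑ i, ‖f k i‖ ^ 2) (fun _ _ => by positivity) (mem_univ k)

theorem power_pos {f : Fin K → Fin Nt → ℂ} (hf : f ≠ 0) : 0 < power f :=
  Real.sqrt_pos.1 <| (norm_pos_iff.2 hf).trans_le (norm_le_sqrt_power f)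

theorem continuous_power : Continuous (power : (Fin K → Fin Nt → ℂ) → ℝ) := by
  unfold power
  fun_prop

theorem isCompact_setOf_power_le (b : ℝ) :
    IsCompact {f : Fin K → Fin Nt → ℂ | power f ≤ b} :=
  (isCompact_closedBall 0 √b).of_isClosed_subset (isClosed_le continuous_power continuous_const)
    fun f hf => mem_closedBall_zero_iff.2 <|
      (norm_le_sqrt_power f).trans (Real.sqrt_le_sqrt hf)

end Power

section SINR

variable {Nt K : ℕ} {h : Fin K → Fin Nt → ℂ} {σ2 : ℝ}

theorem SINR_nonneg (hσ2 : 0 ≤ σ2) (f : Fin K → Fin Nt → ℂ) (k : Fin K) :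
    0 ≤ SINR h σ2 f k := by
  unfold SINR
  positivity

theorem continuous_SINR (hσ2 : 0 < σ2) (k : Fin K) : Continuous fun f => SINR h σ2 f k := by
  unfold SINR
  have hgain (j : Fin K) :
      Continuous fun f : Fin K → Fin Nt → ℂ => ‖star (h k) ⬝ᵥ f j‖ ^ 2 := by
    unfold dotProduct
    fun_prop
  have hinterference := continuous_finsetSum (univ.erase k) fun j _ => hgain j
  exact (hgain k).div (hinterference.add continuous_const) fun f => by positivity

/-- The max-min-fairness objective `min_k SINR_k(f)`, encoded as an infimum; for `K = 0` it takes
the junk value `0`. -/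
def minSINR (h : Fin K → Fin Nt → ℂ) (σ2 : ℝ) (f : Fin K → Fin Nt → ℂ) : ℝ :=
  ⨅ k, SINR h σ2 f k

theorem minSINR_nonneg (hσ2 : 0 ≤ σ2) (f : Fin K → Fin Nt → ℂ) : 0 ≤ minSINR h σ2 f :=
  Real.iInf_nonneg (SINR_nonneg hσ2 f)

variable [Nonempty (Fin K)]

theorem le_minSINR_iff {x : ℝ} {f : Fin K → Fin Nt → ℂ} :
    x ≤ minSINR h σ2 f ↔ ∀ k, x ≤ SINR h σ2 f k :=
  le_ciInf_iff (Set.finite_range _).bddBelow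

theorem continuous_minSINR (hσ2 : 0 < σ2) : Continuous (minSINR h σ2) := by
  unfold minSINR
  simp only [← inf'_univ_eq_ciInf]
  exact .finset_inf'_apply _ fun k _ => continuous_SINR hσ2 k

end SINR

section Sensing

variable {Nt K N : ℕ} {a : Fin Nt → ℂ} {Λ : Matrix (Fin 2) (Fin N) ℝ}
  {D : Matrix (Fin N) (Fin N) ℝ} {ε : ℝ}

theorem continuous_gfun : Continuous (gfun a : (Fin K → Fin Nt → ℂ) → ℝ) := by
  unfold gfun dotProduct
  fun_prop

theorem gfun_nonneg (f : Fin K → Fin Nt → ℂ) : 0 ≤ gfun a f := by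
  unfold gfun
  positivity

theorem gfun_zero : gfun a (0 : Fin K → Fin Nt → ℂ) = 0 := by
  simp [gfun]

theorem Cq_eq_Cq_one_div (hΛD : IsUnit (Λ * D * Λᵀ).det) {q : ℝ} (hq : q ≠ 0) :
    Cq Λ D q = Cq Λ D 1 / q := by
  have := invertibleOfNonzero hq
  simp [Cq, Matrix.inv_smul _ q hΛD, div_eq_inv_mul]

theorem Cq_one_pos (hΛD : (Λ * D * Λᵀ).PosDef) : 0 < Cq Λ D 1 := by
  simpa [Cq] using hΛD.inv.trace_pos

/-- The beamformers meeting the sensing requirement shared by both problems: some effective sensing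
power `q ≤ g(f)` brings the Cramér-Rao bound `C(q)` down to `ε`. -/
def sensingFeasible (K : ℕ) (a : Fin Nt → ℂ) (Λ : Matrix (Fin 2) (Fin N) ℝ)
    (D : Matrix (Fin N) (Fin N) ℝ) (ε : ℝ) : Set (Fin K → Fin Nt → ℂ) :=
  {f | ∃ q : ℝ, 0 < q ∧ q ≤ gfun a f ∧ Cq Λ D q ≤ ε}

theorem ne_zero_of_mem_sensingFeasible {f : Fin K → Fin Nt → ℂ}
    (hf : f ∈ sensingFeasible K a Λ D ε) : f ≠ 0 := by
  rintro rfl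
  obtain ⟨q, hq, hqg, -⟩ := hf
  exact (hq.trans_le hqg).ne' gfun_zero

theorem sensingFeasible_eq_setOf_le (hΛD : (Λ * D * Λᵀ).PosDef) :
    sensingFeasible K a Λ D ε = {f | Cq Λ D 1 ≤ ε * gfun a f} := by
  ext f
  have hC := Cq_one_pos hΛD
  have Cq_le_iff {q : ℝ} (hq : 0 < q) : Cq Λ D q ≤ ε ↔ Cq Λ D 1 ≤ ε * q := by
    rw [Cq_eq_Cq_one_div hΛD.det_pos.ne'.isUnit hq.ne', div_le_iff₀ hq]
  constructor
  · rintro ⟨q, hq, hqg, hqε⟩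
    rw [Cq_le_iff hq] at hqε
    have hε : 0 < ε := pos_of_mul_pos_left (hC.trans_le hqε) hq.le
    exact hqε.trans (by gcongr)
  · intro (hf : Cq Λ D 1 ≤ ε * gfun a f)
    have hg : 0 < gfun a f := (gfun_nonneg f).lt_of_ne' fun hg => by simp [hg, hC.not_ge] at hf
    exact ⟨gfun a f, hg, le_rfl, (Cq_le_iff hg).2 hf⟩

theorem isClosed_sensingFeasible (hΛD : (Λ * D * Λᵀ).PosDef) :
    IsClosed (sensingFeasible K a Λ D ε) := by
  rw [sensingFeasible_eq_setOf_le hΛD]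
  exact isClosed_le continuous_const (continuous_const.mul continuous_gfun)

end Sensing

section OptimalValues

variable {Nt K N : ℕ} {h : Fin K → Fin Nt → ℂ} {a : Fin Nt → ℂ} {σ2 : ℝ}
  {Λ : Matrix (Fin 2) (Fin N) ℝ} {D : Matrix (Fin N) (Fin N) ℝ} {P ε x v : ℝ}

theorem Sfeas_eq_image : Sfeas h a σ2 Λ D P ε =
    minSINR h σ2 '' {f ∈ sensingFeasible K a Λ D ε | power f ≤ P} := by
  ext v
  simp only [Sfeas, minSINR, sensingFeasible, Set.mem_image, Set.mem_ofPred_eq, eq_comm (a := v),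
    and_assoc, and_left_comm]

theorem isGreatest_Sval [Nonempty (Fin K)] (hσ2 : 0 < σ2) (hΛD : (Λ * D * Λᵀ).PosDef)
    (hne : (Sfeas h a σ2 Λ D P ε).Nonempty) :
    IsGreatest (Sfeas h a σ2 Λ D P ε) (Sval h a σ2 Λ D P ε) := by
  have hcompact : IsCompact (Sfeas h a σ2 Λ D P ε) := by
    rw [Sfeas_eq_image]
    exact ((isCompact_setOf_power_le P).inter_left (isClosed_sensingFeasible hΛD)).image
      (continuous_minSINR hσ2)
  exact hcompact.isGreatest_sSup hne

theorem Sval_nonneg (hσ2 : 0 ≤ σ2) : 0 ≤ Sval h a σ2 Λ D P ε := by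
  apply Real.sSup_nonneg
  rintro _ ⟨f, -, -, rfl⟩
  exact minSINR_nonneg hσ2 f

theorem pos_of_mem_Pfeas (hP : 0 < P) (hv : v ∈ Pfeas h a σ2 Λ D x P ε) : 0 < v := by
  obtain ⟨f, -, hf, rfl⟩ := hv
  exact div_pos (power_pos (ne_zero_of_mem_sensingFeasible hf)) hP

variable [Nonempty (Fin K)]

theorem Pfeas_eq_image : Pfeas h a σ2 Λ D x P ε =
    (fun f => power f / P) '' {f ∈ sensingFeasible K a Λ D ε | x ≤ minSINR h σ2 f} := by
  ext v
  simp only [Pfeas, ge_iff_le, ← le_minSINR_iff, sensingFeasible, Set.mem_image,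
    Set.mem_ofPred_eq, eq_comm (a := v), and_assoc, and_left_comm]

theorem isLeast_Pval (hσ2 : 0 < σ2) (hΛD : (Λ * D * Λᵀ).PosDef) (hP : 0 < P)
    (hne : (Pfeas h a σ2 Λ D x P ε).Nonempty) :
    IsLeast (Pfeas h a σ2 Λ D x P ε) (Pval h a σ2 Λ D x P ε) := by
  have hclosed : IsClosed {f ∈ sensingFeasible K a Λ D ε | x ≤ minSINR h σ2 f} :=
    (isClosed_sensingFeasible hΛD).inter (isClosed_le continuous_const (continuous_minSINR hσ2))
  have hcompact (b : ℝ) : IsCompact {f : Fin K → Fin Nt → ℂ | power f / P ≤ b} := by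
    simpa only [div_le_iff₀ hP] using isCompact_setOf_power_le (b * P)
  have hattained : ∃ m, IsLeast (Pfeas h a σ2 Λ D x P ε) m := by
    rw [Pfeas_eq_image] at hne ⊢
    exact exists_isLeast_image_of_isCompact_sublevel hclosed hne.of_image
      (continuous_power.div_const P) hcompact
  obtain ⟨m, hm⟩ := hattained
  rwa [Pval, hm.csInf_eq]

-- An infeasible `x` has the junk value `Pval = sInf ∅ = 0`, which `v ≠ 0` excludes.
theorem Pval_eq_iff_isLeast (hσ2 : 0 < σ2) (hΛD : (Λ * D * Λᵀ).PosDef) (hP : 0 < P)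
    (hv : v ≠ 0) : Pval h a σ2 Λ D x P ε = v ↔ IsLeast (Pfeas h a σ2 Λ D x P ε) v := by
  refine ⟨?_, IsLeast.csInf_eq⟩
  rintro rfl
  refine isLeast_Pval hσ2 hΛD hP (Set.nonempty_iff_ne_empty.2 fun hempty => hv ?_)
  rw [Pval, hempty, Real.sInf_empty]

theorem isGreatest_setOf_isLeast_Pfeas (hσ2 : 0 < σ2) (hΛD : (Λ * D * Λᵀ).PosDef) (hP : 0 < P)
    (hv : IsLeast (Pfeas h a σ2 Λ D x P ε) v) :
    IsGreatest {y | IsLeast (Pfeas h a σ2 Λ D y P ε) v} (Sval h a σ2 Λ D (v * P) ε) := by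
  have hSne : (Sfeas h a σ2 Λ D (v * P) ε).Nonempty := by
    obtain ⟨f, -, hf, rfl⟩ := hv.1
    exact ⟨_, f, (div_mul_cancel₀ _ hP.ne').ge, hf, rfl⟩
  have hS := isGreatest_Sval hσ2 hΛD hSne
  simp only [Sfeas_eq_image, ← div_le_iff₀ hP] at hS
  simp only [Pfeas_eq_image] at hv ⊢
  exact isGreatest_setOf_isLeast_image hS hv

end OptimalValues

theorem S_of_P_is_greatest_general {Nt K N : ℕ} (hK : 0 < K) {h : Fin K → Fin Nt → ℂ}
    {a : Fin Nt → ℂ} {σ2 : ℝ} (hσ2 : 0 < σ2) {Λ : Matrix (Fin 2) (Fin N) ℝ}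
    {D : Matrix (Fin N) (Fin N) ℝ} (hΛD : (Λ * D * Λᵀ).PosDef) {P ε η : ℝ} (hP : 0 < P)
    (hV : (Pfeas h a σ2 Λ D η P ε).Nonempty) :
    IsGreatest {x : ℝ | 0 ≤ x ∧ Pval h a σ2 Λ D x P ε = Pval h a σ2 Λ D η P ε}
        (Sval h a σ2 Λ D (Pval h a σ2 Λ D η P ε * P) ε) ∧
      η ≤ Sval h a σ2 Λ D (Pval h a σ2 Λ D η P ε * P) ε := by
  have : Nonempty (Fin K) := ⟨⟨0, hK⟩⟩
  have hleast := isLeast_Pval hσ2 hΛD hP hV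
  have hgreatest := isGreatest_setOf_isLeast_Pfeas hσ2 hΛD hP hleast
  have hVne : Pval h a σ2 Λ D η P ε ≠ 0 := (pos_of_mem_Pfeas hP hleast.1).ne'
  simp only [Pval_eq_iff_isLeast hσ2 hΛD hP hVne]
  exact ⟨⟨⟨Sval_nonneg hσ2.le, hgreatest.1⟩, fun x hx => hgreatest.2 hx.2⟩, hgreatest.2 hleast⟩

/-- Lemma 3, first identity: `S(𝒫(η,P,ε)·P, ε)` is the greatest element of
`{x ≥ 0 : 𝒫(x,P,ε) = 𝒫(η,P,ε)}`; in particular it is at least `η`. -/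
theorem S_of_P_is_greatest {Nt K N : ℕ} (hK : 0 < K)
    (h : Fin K → Fin Nt → ℂ) (a : Fin Nt → ℂ) (σ2 : ℝ) (hσ2 : 0 < σ2)
    (Λ : Matrix (Fin 2) (Fin N) ℝ) (D : Matrix (Fin N) (Fin N) ℝ)
    (hDdiag : D.IsDiag) (hDpd : D.PosDef) (hΛD : (Λ * D * Λᵀ).PosDef)
    (P ε η : ℝ) (hP : 0 < P) (hε : 0 < ε) (hη : 0 < η)
    -- the infimum defining 𝒫(x, P, ε) is attained whenever its feasible set is nonempty
    (hattainP : ∀ x : ℝ, (Pfeas h a σ2 Λ D x P ε).Nonempty →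
        Pval h a σ2 Λ D x P ε ∈ Pfeas h a σ2 Λ D x P ε)
    -- V := 𝒫(η, P, ε) is (finite and) positive
    (hV : (Pfeas h a σ2 Λ D η P ε).Nonempty)
    (hVpos : 0 < Pval h a σ2 Λ D η P ε)
    -- the supremum defining S(V·P, ε) is attained, with positive value
    (hattainS : ∃ f : Fin K → Fin Nt → ℂ,
        power f ≤ Pval h a σ2 Λ D η P ε * P ∧
        (∃ q : ℝ, 0 < q ∧ q ≤ gfun a f ∧ Cq Λ D q ≤ ε) ∧
        (⨅ k, SINR h σ2 f k) = Sval h a σ2 Λ D (Pval h a σ2 Λ D η P ε * P) ε)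
    (hSpos : 0 < Sval h a σ2 Λ D (Pval h a σ2 Λ D η P ε * P) ε) :
    IsGreatest {x : ℝ | 0 ≤ x ∧ Pval h a σ2 Λ D x P ε = Pval h a σ2 Λ D η P ε}
        (Sval h a σ2 Λ D (Pval h a σ2 Λ D η P ε * P) ε) ∧
      η ≤ Sval h a σ2 Λ D (Pval h a σ2 Λ D η P ε * P) ε :=
  S_of_P_is_greatest_general hK hσ2 hΛD hP hV

end
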